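/- arXiv:1503.02429 — 2 statements merged into one kernel-verified Lean document; each statement's English description precedes it below -/
import Mathlib

section
/- Let ε ∈ {−1, 1}, μ > 0, and ψ(x) = ε·μ²|x|²/2 on ℝ² (Gaussian density for ε = −1, anti-Gaussian for ε = 1). Suppose γ: ℝ × [0,T) → ℝ² evolves by ψMCF and for every t the closed curve γ(·,t) has turning number 1; let A(t) be its signed area. Then A′(t) = −2π − 2εμ²·A(t), hence A(t) = (A(0) + επ/μ²)e^{−2εμ²t} − επ/μ². In particular: for ε = 1 and A(0) = A₀ > 0 the signed area vanishes exactly at t = (1/(2μ²))·ln(1 + μ²A₀/π); for ε = −1 and A(0) = π/μ² the signed area is constant in t. -/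
noncomputable section
open Real Set

def dot2 (v w : ℝ × ℝ) : ℝ := v.1 * w.1 + v.2 * w.2

def nrm2 (v : ℝ × ℝ) : ℝ := Real.sqrt (v.1 ^ 2 + v.2 ^ 2)

def Jrot (v : ℝ × ℝ) : ℝ × ℝ := (-v.2, v.1)

structure IsClosedCurve (γ : ℝ → ℝ × ℝ) : Prop where
  smooth : ContDiff ℝ (⊤ : ℕ∞) γ
  periodic : Function.Periodic γ (2 * π)
  regular : ∀ u, deriv γ u ≠ 0

def tangentC (γ : ℝ → ℝ × ℝ) (u : ℝ) : ℝ × ℝ := (nrm2 (deriv γ u))⁻¹ • deriv γ u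

def normalC (γ : ℝ → ℝ × ℝ) (u : ℝ) : ℝ × ℝ := Jrot (tangentC γ u)

def arcDeriv {F : Type*} [NormedAddCommGroup F] [NormedSpace ℝ F]
    (γ : ℝ → ℝ × ℝ) (h : ℝ → F) (u : ℝ) : F :=
  (nrm2 (deriv γ u))⁻¹ • deriv h u

def curvature (γ : ℝ → ℝ × ℝ) (u : ℝ) : ℝ :=
  dot2 (arcDeriv γ (tangentC γ) u) (normalC γ u)

def psiCurv (ψ : ℝ × ℝ → ℝ) (γ : ℝ → ℝ × ℝ) (u : ℝ) : ℝ :=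
  curvature γ u - fderiv ℝ ψ (γ u) (normalC γ u)

def IsPsiMinimal (ψ : ℝ × ℝ → ℝ) (γ : ℝ → ℝ × ℝ) : Prop :=
  ∀ u, psiCurv ψ γ u = 0

def signedArea (γ : ℝ → ℝ × ℝ) : ℝ :=
  (1/2) * ∫ u in (0:ℝ)..(2*π), ((γ u).1 * (deriv γ u).2 - (γ u).2 * (deriv γ u).1)

def turningNumber (γ : ℝ → ℝ × ℝ) : ℝ :=
  (1/(2*π)) * ∫ u in (0:ℝ)..(2*π), curvature γ u * nrm2 (deriv γ u)

def windingNumber (γ : ℝ → ℝ × ℝ) : ℝ :=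
  (1/(2*π)) * ∫ u in (0:ℝ)..(2*π),
    ((γ u).1 * (deriv γ u).2 - (γ u).2 * (deriv γ u).1) / (nrm2 (γ u))^2

def hess2 (ψ : ℝ × ℝ → ℝ) (x v : ℝ × ℝ) : ℝ :=
  fderiv ℝ (fun y => fderiv ℝ ψ y v) x v

def SmoothFamily (γ : ℝ → ℝ → ℝ × ℝ) : Prop :=
  ContDiff ℝ (⊤ : ℕ∞) fun p : ℝ × ℝ => γ p.1 p.2

/-!
For any family of closed curves, integrating by parts in the first variation of the area gives
`A' = ∫ det(∂ₜγ, ∂ᵤγ) du`, which under ψMCF is minus the total ψ-curvature `∫ k_ψ ds`. If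
`∇ψ(x) = c x`, then `⟨∇ψ(γ), N⟩ ds = -c det(γ, ∂ᵤγ) du`, so the total ψ-curvature is
`2π · turning number + 2 c A` and `A` solves a linear ODE with constant coefficients.
-/

section CurveFamilies

variable {E : Type*} [NormedAddCommGroup E] [NormedSpace ℝ E] {γ : ℝ → ℝ → E}

lemma hasDerivAt_comp_prodMk_left {F : ℝ × ℝ → E} {t u : ℝ}
    (hF : DifferentiableAt ℝ F (t, u)) :
    HasDerivAt (fun τ => F (τ, u)) (fderiv ℝ F (t, u) (1, 0)) t :=
  hF.hasFDerivAt.comp_hasDerivAt (f := fun τ => (τ, u)) t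
    ((hasDerivAt_id t).prodMk (hasDerivAt_const t u))

lemma hasDerivAt_comp_prodMk_right {F : ℝ × ℝ → E} {t u : ℝ}
    (hF : DifferentiableAt ℝ F (t, u)) :
    HasDerivAt (fun v => F (t, v)) (fderiv ℝ F (t, u) (0, 1)) u :=
  hF.hasFDerivAt.comp_hasDerivAt (f := fun v => (t, v)) u
    ((hasDerivAt_const u t).prodMk (hasDerivAt_id u))

lemma contDiff_deriv_fst {m n : WithTop ℕ∞} (hγ : ContDiff ℝ n (Function.uncurry γ))
    (hmn : m + 1 ≤ n) :
    ContDiff ℝ m (Function.uncurry fun t u => deriv (fun τ => γ τ u) t) := by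
  have hdiff : Differentiable ℝ (Function.uncurry γ) :=
    (hγ.of_le (le_add_self.trans hmn)).differentiable one_ne_zero
  have heq : (Function.uncurry fun t u => deriv (fun τ => γ τ u) t)
      = fun p => fderiv ℝ (Function.uncurry γ) p (1, 0) :=
    funext fun p => (hasDerivAt_comp_prodMk_left (hdiff p)).deriv
  exact heq ▸ (hγ.fderiv_right hmn).clm_apply contDiff_const

lemma contDiff_deriv_snd {m n : WithTop ℕ∞} (hγ : ContDiff ℝ n (Function.uncurry γ))
    (hmn : m + 1 ≤ n) :
    ContDiff ℝ m (Function.uncurry fun t u => deriv (γ t) u) := by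
  have hdiff : Differentiable ℝ (Function.uncurry γ) :=
    (hγ.of_le (le_add_self.trans hmn)).differentiable one_ne_zero
  have heq : (Function.uncurry fun t u => deriv (γ t) u)
      = fun p => fderiv ℝ (Function.uncurry γ) p (0, 1) :=
    funext fun p => (hasDerivAt_comp_prodMk_right (hdiff p)).deriv
  exact heq ▸ (hγ.fderiv_right hmn).clm_apply contDiff_const

lemma deriv_fst_deriv_snd_comm (hγ : ContDiff ℝ 2 (Function.uncurry γ)) (t u : ℝ) :
    deriv (fun τ => deriv (γ τ) u) t = deriv (fun v => deriv (fun τ => γ τ v) t) u := by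
  set D := fderiv ℝ (Function.uncurry γ)
  have hdiff : Differentiable ℝ (Function.uncurry γ) := hγ.differentiable two_ne_zero
  have hD : DifferentiableAt ℝ D (t, u) :=
    (hγ.fderiv_right (m := 1) one_add_one_eq_two.le).differentiable one_ne_zero _
  have hsymm : IsSymmSndFDerivAt ℝ (Function.uncurry γ) (t, u) :=
    hγ.contDiffAt.isSymmSndFDerivAt (by simp)
  calc deriv (fun τ => deriv (γ τ) u) t
      = deriv (fun τ => D (τ, u) (0, 1)) t :=
        congrArg (deriv · t) (funext fun τ => (hasDerivAt_comp_prodMk_right (hdiff (τ, u))).deriv)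
    _ = fderiv ℝ D (t, u) (1, 0) (0, 1) := by
        simpa using ((hasDerivAt_comp_prodMk_left hD).clm_apply (hasDerivAt_const t (0, 1))).deriv
    _ = fderiv ℝ D (t, u) (0, 1) (1, 0) := hsymm (1, 0) (0, 1)
    _ = deriv (fun v => D (t, v) (1, 0)) u := by
        simpa using
          ((hasDerivAt_comp_prodMk_right hD).clm_apply (hasDerivAt_const u (1, 0))).deriv.symm
    _ = deriv (fun v => deriv (fun τ => γ τ v) t) u :=
        congrArg (deriv · u)
          (funext fun v => (hasDerivAt_comp_prodMk_left (hdiff (t, v))).deriv.symm)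

lemma hasDerivAt_fst_of_contDiff (hγ : ContDiff ℝ 1 (Function.uncurry γ)) (t u : ℝ) :
    HasDerivAt (fun τ => γ τ u) (deriv (fun τ => γ τ u) t) t :=
  ((hγ.differentiable one_ne_zero).comp
    (differentiable_id.prodMk (differentiable_const u)) t).hasDerivAt

lemma hasDerivAt_intervalIntegral_of_contDiff (hγ : ContDiff ℝ 1 (Function.uncurry γ))
    (a b t : ℝ) :
    HasDerivAt (fun τ => ∫ u in a..b, γ τ u) (∫ u in a..b, deriv (fun τ => γ τ u) t) t := by
  have hcurve (τ : ℝ) : Continuous (γ τ) := hγ.continuous.comp (Continuous.prodMk_right τ)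
  have hderiv : Continuous (Function.uncurry fun t u => deriv (fun τ => γ τ u) t) :=
    (contDiff_deriv_fst (m := 0) hγ (zero_add 1).le).continuous
  obtain ⟨C, hC⟩ := ((isCompact_Icc (a := t - 1) (b := t + 1)).prod
    (isCompact_uIcc (a := a) (b := b))).exists_bound_of_continuousOn hderiv.continuousOn
  exact (intervalIntegral.hasDerivAt_integral_of_dominated_loc_of_deriv_le
    (F' := fun τ u => deriv (fun τ => γ τ u) τ) (bound := fun _ => C)
    (Icc_mem_nhds (sub_one_lt t) (lt_add_one t))
    (.of_forall fun τ => (hcurve τ).aestronglyMeasurable)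
    ((hcurve t).intervalIntegrable a b)
    (hderiv.comp (Continuous.prodMk_right t)).aestronglyMeasurable
    (.of_forall fun u hu τ hτ => hC (τ, u) ⟨hτ, uIoc_subset_uIcc hu⟩)
    intervalIntegrable_const
    (.of_forall fun u _ τ _ => hasDerivAt_fst_of_contDiff hγ τ u)).2

end CurveFamilies

section FirstVariation

/-- The determinant `det(v, w)` of two plane vectors, the integrand of `signedArea`. -/
def det2 (v w : ℝ × ℝ) : ℝ := v.1 * w.2 - v.2 * w.1

lemma det2_anticomm (v w : ℝ × ℝ) : -det2 v w = det2 w v := by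
  simp only [det2]
  ring

lemma det2_smul_left (a : ℝ) (v w : ℝ × ℝ) : det2 (a • v) w = a * det2 v w := by
  simp only [det2, Prod.smul_fst, Prod.smul_snd, smul_eq_mul]
  ring

lemma contDiff_det2 {E : Type*} [NormedAddCommGroup E] [NormedSpace ℝ E] {n : WithTop ℕ∞}
    {f g : E → ℝ × ℝ} (hf : ContDiff ℝ n f) (hg : ContDiff ℝ n g) :
    ContDiff ℝ n fun x => det2 (f x) (g x) :=
  (hf.fst.mul hg.snd).sub (hf.snd.mul hg.fst)

lemma hasDerivAt_det2 {f g : ℝ → ℝ × ℝ} {f' g' : ℝ × ℝ} {u : ℝ}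
    (hf : HasDerivAt f f' u) (hg : HasDerivAt g g' u) :
    HasDerivAt (fun v => det2 (f v) (g v)) (det2 f' (g u) + det2 (f u) g') u := by
  refine (HasDerivAt.sub (HasDerivAt.mul hf.fst hg.snd)
    (HasDerivAt.mul hf.snd hg.fst)).congr_deriv ?_
  simp only [det2]
  ring

lemma integral_det2_deriv_comm {f g : ℝ → ℝ × ℝ} {a b : ℝ} (hf : ContDiff ℝ 1 f)
    (hg : ContDiff ℝ 1 g) (hfab : f b = f a) (hgab : g b = g a) :
    ∫ u in a..b, det2 (f u) (deriv g u) = ∫ u in a..b, det2 (g u) (deriv f u) := by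
  have hf' (u : ℝ) : HasDerivAt f (deriv f u) u := (hf.differentiable one_ne_zero u).hasDerivAt
  have hg' (u : ℝ) : HasDerivAt g (deriv g u) u := (hg.differentiable one_ne_zero u).hasDerivAt
  have hfc : ContDiff ℝ 0 (deriv f) := hf.deriv'
  have hgc : ContDiff ℝ 0 (deriv g) := hg.deriv'
  have hint₁ := (contDiff_det2 (hf.of_le zero_le_one) hgc).continuous.intervalIntegrable
    (μ := MeasureTheory.volume) a b
  have hint₂ := (contDiff_det2 (hg.of_le zero_le_one) hfc).continuous.intervalIntegrable
    (μ := MeasureTheory.volume) a b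
  have hderiv (u : ℝ) : HasDerivAt (fun v => det2 (f v) (g v))
      (det2 (f u) (deriv g u) - det2 (g u) (deriv f u)) u := by
    refine (hasDerivAt_det2 (hf' u) (hg' u)).congr_deriv ?_
    rw [← det2_anticomm (g u)]
    ring
  rw [← sub_eq_zero, ← intervalIntegral.integral_sub hint₁ hint₂,
    intervalIntegral.integral_eq_sub_of_hasDerivAt (fun u _ => hderiv u) (hint₁.sub hint₂),
    hfab, hgab, sub_self]

theorem hasDerivAt_signedArea {γ : ℝ → ℝ → ℝ × ℝ} {t : ℝ}
    (hγ : ContDiff ℝ 2 (Function.uncurry γ)) (hclosed : γ t (2 * π) = γ t 0)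
    (hvelocity : deriv (fun τ => γ τ (2 * π)) t = deriv (fun τ => γ τ 0) t) :
    HasDerivAt (fun τ => signedArea (γ τ))
      (∫ u in (0 : ℝ)..(2 * π), det2 (deriv (fun τ => γ τ u) t) (deriv (γ t) u)) t := by
  let V (u : ℝ) : ℝ × ℝ := deriv (fun τ => γ τ u) t
  have hslice : ContDiff ℝ 1 fun u : ℝ => (t, u) := contDiff_prodMk_right t
  have hγ₁ : ContDiff ℝ 1 (Function.uncurry γ) := hγ.of_le one_le_two
  have hγt : ContDiff ℝ 1 (γ t) := hγ₁.comp hslice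
  have hV : ContDiff ℝ 1 V := (contDiff_deriv_fst hγ one_add_one_eq_two.le).comp hslice
  have hγu : ContDiff ℝ 1 (Function.uncurry fun t u => deriv (γ t) u) :=
    contDiff_deriv_snd hγ one_add_one_eq_two.le
  have hintegrand (u : ℝ) : deriv (fun τ => det2 (γ τ u) (deriv (γ τ) u)) t
      = det2 (V u) (deriv (γ t) u) + det2 (γ t u) (deriv V u) := by
    rw [(hasDerivAt_det2 (hasDerivAt_fst_of_contDiff hγ₁ t u)
      (hasDerivAt_fst_of_contDiff hγu t u)).deriv, deriv_fst_deriv_snd_comm hγ]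
  have hint₁ := (contDiff_det2 (hV.of_le zero_le_one) hγt.deriv').continuous.intervalIntegrable
    (μ := MeasureTheory.volume) 0 (2 * π)
  have hint₂ := (contDiff_det2 (hγt.of_le zero_le_one) hV.deriv').continuous.intervalIntegrable
    (μ := MeasureTheory.volume) 0 (2 * π)
  refine ((hasDerivAt_intervalIntegral_of_contDiff
    (γ := fun τ u => det2 (γ τ u) (deriv (γ τ) u))
    (contDiff_det2 hγ₁ hγu) 0 (2 * π) t).const_mul (1 / 2)).congr_deriv ?_
  simp only [hintegrand]
  rw [intervalIntegral.integral_add hint₁ hint₂, integral_det2_deriv_comm hγt hV hclosed hvelocity]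
  ring

end FirstVariation

section PlaneCurves

variable {γ : ℝ → ℝ × ℝ}

lemma nrm2_sq (v : ℝ × ℝ) : nrm2 v ^ 2 = v.1 ^ 2 + v.2 ^ 2 :=
  Real.sq_sqrt (by positivity)

lemma nrm2_eq_zero {v : ℝ × ℝ} : nrm2 v = 0 ↔ v = 0 := by
  rw [nrm2, Real.sqrt_eq_zero (by positivity), Prod.ext_iff,
    add_eq_zero_iff_of_nonneg (sq_nonneg _) (sq_nonneg _)]
  simp

lemma contDiff_nrm2 {E : Type*} [NormedAddCommGroup E] [NormedSpace ℝ E] {n : WithTop ℕ∞}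
    {f : E → ℝ × ℝ} (hf : ContDiff ℝ n f) (hne : ∀ x, f x ≠ 0) :
    ContDiff ℝ n fun x => nrm2 (f x) :=
  ((hf.fst.pow 2).add (hf.snd.pow 2)).sqrt fun x h =>
    hne x (nrm2_eq_zero.1 (by rw [nrm2, h, Real.sqrt_zero]))

lemma nrm2_smul_normalC (γ : ℝ → ℝ × ℝ) (u : ℝ) :
    nrm2 (deriv γ u) • normalC γ u = Jrot (deriv γ u) := by
  rcases eq_or_ne (nrm2 (deriv γ u)) 0 with h | h
  · rw [h, nrm2_eq_zero.1 h]
    simp [Jrot, Prod.zero_eq_mk]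
  · ext <;> simp [normalC, tangentC, Jrot, h]

lemma det2_normalC_deriv (γ : ℝ → ℝ × ℝ) (u : ℝ) :
    det2 (normalC γ u) (deriv γ u) = -nrm2 (deriv γ u) := by
  have hsq := nrm2_sq (deriv γ u)
  rcases eq_or_ne (nrm2 (deriv γ u)) 0 with h | h
  · rw [h, nrm2_eq_zero.1 h]
    simp [det2]
  · simp only [det2, normalC, tangentC, Jrot, Prod.smul_fst, Prod.smul_snd, smul_eq_mul]
    field_simp
    linarith

lemma contDiff_tangentC {m n : WithTop ℕ∞} (hγ : ContDiff ℝ n γ) (hmn : m + 1 ≤ n)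
    (hregular : ∀ u, deriv γ u ≠ 0) : ContDiff ℝ m (tangentC γ) := by
  have hγ' : ContDiff ℝ m (deriv γ) := (hγ.of_le hmn).deriv'
  exact ((contDiff_nrm2 hγ' hregular).inv fun u => nrm2_eq_zero.not.2 (hregular u)).smul hγ'

lemma continuous_curvature (hγ : ContDiff ℝ 2 γ) (hregular : ∀ u, deriv γ u ≠ 0) :
    Continuous (curvature γ) := by
  have hspeed : Continuous fun u => nrm2 (deriv γ u) :=
    (contDiff_nrm2 (hγ.of_le one_le_two).deriv' hregular).continuous (n := 0)
  have hspeed_ne (u : ℝ) : nrm2 (deriv γ u) ≠ 0 := nrm2_eq_zero.not.2 (hregular u)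
  have hT : ContDiff ℝ 1 (tangentC γ) := contDiff_tangentC hγ one_add_one_eq_two.le hregular
  have hT₀ := hT.continuous
  have hT₁ := hT.continuous_deriv_one
  have harc : Continuous (arcDeriv γ (tangentC γ)) := (hspeed.inv₀ hspeed_ne).smul hT₁
  exact (harc.fst.mul hT₀.snd.neg).add (harc.snd.mul hT₀.fst)

lemma periodic_deriv {F : Type*} [NormedAddCommGroup F] [NormedSpace ℝ F] {f : ℝ → F} {c : ℝ}
    (hf : Function.Periodic f c) : Function.Periodic (deriv f) c := fun u => by
  rw [← deriv_comp_add_const, hf.funext]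

lemma periodic_tangentC {c : ℝ} (hγ : Function.Periodic γ c) :
    Function.Periodic (tangentC γ) c := fun u => by
  simp only [tangentC, periodic_deriv hγ u]

lemma periodic_normalC {c : ℝ} (hγ : Function.Periodic γ c) :
    Function.Periodic (normalC γ) c := fun u => by
  simp only [normalC, periodic_tangentC hγ u]

lemma periodic_psiCurv (ψ : ℝ × ℝ → ℝ) {c : ℝ} (hγ : Function.Periodic γ c) :
    Function.Periodic (psiCurv ψ γ) c := fun u => by
  simp only [psiCurv, curvature, arcDeriv, hγ u, periodic_deriv hγ u,
    periodic_deriv (periodic_tangentC hγ) u, periodic_normalC hγ u]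

lemma integral_curvature (γ : ℝ → ℝ × ℝ) :
    ∫ u in (0 : ℝ)..(2 * π), curvature γ u * nrm2 (deriv γ u) = 2 * π * turningNumber γ := by
  rw [turningNumber]
  field_simp

lemma integral_det2_deriv_self (γ : ℝ → ℝ × ℝ) :
    ∫ u in (0 : ℝ)..(2 * π), det2 (γ u) (deriv γ u) = 2 * signedArea γ := by
  simp only [signedArea, det2]
  ring

theorem hasDerivAt_signedArea_of_psiMCF {ψ : ℝ × ℝ → ℝ} {γ : ℝ → ℝ → ℝ × ℝ} {t : ℝ}
    (hγ : ContDiff ℝ 2 (Function.uncurry γ)) (hperiodic : Function.Periodic (γ t) (2 * π))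
    (hflow : ∀ u, deriv (fun τ => γ τ u) t = psiCurv ψ (γ t) u • normalC (γ t) u) :
    HasDerivAt (fun τ => signedArea (γ τ))
      (-∫ u in (0 : ℝ)..(2 * π), psiCurv ψ (γ t) u * nrm2 (deriv (γ t) u)) t := by
  -- Nearby curves need not be closed (they are not for `τ < 0`), so the velocity is periodic
  -- because the flow equation expresses it through `γ t` alone.
  have hvelocity : deriv (fun τ => γ τ (2 * π)) t = deriv (fun τ => γ τ 0) t := by
    rw [hflow, hflow, (periodic_psiCurv ψ hperiodic).eq, (periodic_normalC hperiodic).eq]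
  refine (hasDerivAt_signedArea hγ hperiodic.eq hvelocity).congr_deriv ?_
  rw [← intervalIntegral.integral_neg]
  congr 1 with u
  rw [hflow, det2_smul_left, det2_normalC_deriv, mul_neg]

end PlaneCurves

section GaussianDensity

lemma fderiv_gaussian (c : ℝ) (x v : ℝ × ℝ) :
    fderiv ℝ (fun x => c * nrm2 x ^ 2 / 2) x v = c * dot2 x v := by
  have hfst : HasFDerivAt Prod.fst (ContinuousLinearMap.fst ℝ ℝ ℝ) x := hasFDerivAt_fst
  have hsnd : HasFDerivAt Prod.snd (ContinuousLinearMap.snd ℝ ℝ ℝ) x := hasFDerivAt_snd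
  have h : HasFDerivAt (fun x : ℝ × ℝ => c / 2 * (x.1 ^ 2 + x.2 ^ 2)) _ x :=
    ((hfst.pow 2).add (hsnd.pow 2)).const_mul (c / 2)
  simp only [nrm2_sq, mul_div_right_comm c]
  rw [h.fderiv]
  simp only [Nat.add_one_sub_one, pow_one, nsmul_eq_mul, Nat.cast_ofNat, smul_add, add_apply,
    smul_apply, ContinuousLinearMap.coe_fst', smul_eq_mul, ContinuousLinearMap.coe_snd', dot2]
  ring

lemma psiCurv_gaussian_mul_nrm2 (c : ℝ) (γ : ℝ → ℝ × ℝ) (u : ℝ) :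
    psiCurv (fun x => c * nrm2 x ^ 2 / 2) γ u * nrm2 (deriv γ u)
      = curvature γ u * nrm2 (deriv γ u) + c * det2 (γ u) (deriv γ u) := by
  have hN := nrm2_smul_normalC γ u
  simp only [Prod.ext_iff, Prod.smul_fst, Prod.smul_snd, smul_eq_mul, Jrot] at hN
  rw [psiCurv, fderiv_gaussian, dot2, det2]
  linear_combination -(c * (γ u).1) * hN.1 - c * (γ u).2 * hN.2

theorem integral_psiCurv_gaussian (c : ℝ) {γ : ℝ → ℝ × ℝ} (hγ : ContDiff ℝ 2 γ)
    (hregular : ∀ u, deriv γ u ≠ 0) :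
    ∫ u in (0 : ℝ)..(2 * π), psiCurv (fun x => c * nrm2 x ^ 2 / 2) γ u * nrm2 (deriv γ u)
      = 2 * π * turningNumber γ + 2 * c * signedArea γ := by
  have hγ' : ContDiff ℝ 1 (deriv γ) := ContDiff.deriv' hγ
  have hcurv : Continuous fun u => curvature γ u * nrm2 (deriv γ u) :=
    (continuous_curvature hγ hregular).mul (contDiff_nrm2 hγ' hregular).continuous
  have hdet2 : Continuous fun u => c * det2 (γ u) (deriv γ u) :=
    (contDiff_det2 (hγ.of_le one_le_two) hγ').continuous.const_mul c
  simp only [psiCurv_gaussian_mul_nrm2]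
  rw [intervalIntegral.integral_add (hcurv.intervalIntegrable _ _)
    (hdet2.intervalIntegrable _ _), intervalIntegral.integral_const_mul,
    integral_curvature, integral_det2_deriv_self]
  ring

end GaussianDensity

section LinearODE

lemma eq_of_hasDerivAt_affine {f : ℝ → ℝ} {a b T : ℝ} (hb : b ≠ 0)
    (hf : ∀ t ∈ Ico 0 T, HasDerivAt f (-a - b * f t) t) {t : ℝ} (ht : t ∈ Ico 0 T) :
    f t = (f 0 + a / b) * exp (-b * t) - a / b := by
  let g (s : ℝ) : ℝ := (f s + a / b) * exp (b * s)
  have hg (s : ℝ) (hs : s ∈ Icc 0 t) : HasDerivAt g 0 s := by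
    have hexp := ((hasDerivAt_id s).const_mul b).exp
    refine (((hf s ⟨hs.1, hs.2.trans_lt ht.2⟩).add_const (a / b)).mul hexp).congr_deriv ?_
    simp only [id]
    field_simp
    ring
  have hconst : g t = g 0 := constant_of_has_deriv_right_zero
    (fun s hs => (hg s hs).continuousAt.continuousWithinAt)
    (fun s hs => (hg s (Ico_subset_Icc_self hs)).hasDerivWithinAt) t ⟨ht.1, le_rfl⟩
  simp only [g, mul_zero, exp_zero, mul_one] at hconst
  rw [← hconst, neg_mul, exp_neg, mul_inv_cancel_right₀ (exp_ne_zero _), add_sub_cancel_right]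

lemma add_mul_exp_neg_sub_eq_zero_iff {x p b t : ℝ} (hp : p ≠ 0) (hb : b ≠ 0)
    (hpos : 0 < 1 + x / p) :
    (x + p) * exp (-b * t) - p = 0 ↔ t = 1 / b * log (1 + x / p) := by
  calc (x + p) * exp (-b * t) - p = 0
      ↔ exp (b * t) = 1 + x / p := by
        rw [neg_mul, exp_neg, sub_eq_zero, ← div_eq_mul_inv, div_eq_iff (exp_ne_zero _),
          one_add_div hp, eq_div_iff hp, eq_comm, mul_comm, add_comm x]
    _ ↔ b * t = log (1 + x / p) := by rw [← exp_log hpos, exp_eq_exp, log_exp]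
    _ ↔ t = 1 / b * log (1 + x / p) := by
        rw [one_div_mul_eq_div, eq_div_iff hb, mul_comm]

end LinearODE

theorem area_evolution_gaussian_density_general {c n T : ℝ} (hc : c ≠ 0) {γ : ℝ → ℝ → ℝ × ℝ}
    (hfam : SmoothFamily γ) (hclosed : ∀ t ∈ Ico 0 T, IsClosedCurve (γ t))
    (hflow : ∀ t ∈ Ico 0 T, ∀ u : ℝ, deriv (fun τ => γ τ u) t
      = psiCurv (fun x => c * nrm2 x ^ 2 / 2) (γ t) u • normalC (γ t) u)
    (hturn : ∀ t ∈ Ico 0 T, turningNumber (γ t) = n) :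
    (∀ t ∈ Ico 0 T, HasDerivAt (fun τ => signedArea (γ τ))
        (-(2 * π * n) - 2 * c * signedArea (γ t)) t)
    ∧ (∀ t ∈ Ico 0 T, signedArea (γ t)
        = (signedArea (γ 0) + π * n / c) * exp (-(2 * c) * t) - π * n / c)
    ∧ (n ≠ 0 → 0 < 1 + c * signedArea (γ 0) / (π * n) → ∀ t ∈ Ico 0 T,
        (signedArea (γ t) = 0
          ↔ t = 1 / (2 * c) * log (1 + c * signedArea (γ 0) / (π * n))))
    ∧ (signedArea (γ 0) = -(π * n / c) → ∀ t ∈ Ico 0 T,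
        signedArea (γ t) = signedArea (γ 0)) := by
  have hγ : ContDiff ℝ 2 (Function.uncurry γ) := hfam.of_le (WithTop.coe_le_coe.2 le_top)
  have hderiv (t : ℝ) (ht : t ∈ Ico 0 T) : HasDerivAt (fun τ => signedArea (γ τ))
      (-(2 * π * n) - 2 * c * signedArea (γ t)) t := by
    refine (hasDerivAt_signedArea_of_psiMCF hγ (hclosed t ht).periodic
      (hflow t ht)).congr_deriv ?_
    have hγt : ContDiff ℝ 2 (γ t) := hγ.comp (contDiff_prodMk_right t)
    rw [integral_psiCurv_gaussian c hγt (hclosed t ht).regular,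
      hturn t ht, neg_add']
  have hsol (t : ℝ) (ht : t ∈ Ico 0 T) : signedArea (γ t)
      = (signedArea (γ 0) + π * n / c) * exp (-(2 * c) * t) - π * n / c := by
    have h := eq_of_hasDerivAt_affine (mul_ne_zero two_ne_zero hc) hderiv ht
    rwa [mul_assoc 2 π n, mul_div_mul_left _ _ two_ne_zero] at h
  refine ⟨hderiv, hsol, fun hn hpos t ht => ?_, fun h₀ t ht => ?_⟩
  · have hratio : c * signedArea (γ 0) / (π * n) = signedArea (γ 0) / (π * n / c) := by
      rw [div_div_eq_mul_div, mul_comm]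
    rw [hratio] at hpos ⊢
    rw [hsol t ht]
    exact add_mul_exp_neg_sub_eq_zero_iff (div_ne_zero (mul_ne_zero pi_ne_zero hn) hc)
      (mul_ne_zero two_ne_zero hc) hpos
  · rw [hsol t ht, h₀]
    ring

/-- evolution of the signed area under ψMCF for the (anti-)Gaussian
density ψ(x) = ε μ²|x|²/2 on ℝ². -/
theorem area_evolution_gaussian_density
    (ε μ : ℝ) (hε : ε = 1 ∨ ε = -1) (hμ : 0 < μ)
    (T : ℝ) (hT : 0 < T) (γ : ℝ → ℝ → ℝ × ℝ)
    (hfam : SmoothFamily γ)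
    (hclosed : ∀ t ∈ Set.Ico (0:ℝ) T, IsClosedCurve (γ t))
    (hflow : ∀ t ∈ Set.Ico (0:ℝ) T, ∀ u : ℝ,
      deriv (fun τ => γ τ u) t
        = psiCurv (fun x => ε * μ ^ 2 * (nrm2 x) ^ 2 / 2) (γ t) u
            • normalC (γ t) u)
    (hturn : ∀ t ∈ Set.Ico (0:ℝ) T, turningNumber (γ t) = 1) :
    (∀ t ∈ Set.Ico (0:ℝ) T,
        HasDerivAt (fun τ => signedArea (γ τ))
          (-(2 * π) - 2 * ε * μ ^ 2 * signedArea (γ t)) t)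
    ∧ (∀ t ∈ Set.Ico (0:ℝ) T,
        signedArea (γ t)
          = (signedArea (γ 0) + ε * π / μ ^ 2) * Real.exp (-2 * ε * μ ^ 2 * t)
            - ε * π / μ ^ 2)
    ∧ (ε = 1 → 0 < signedArea (γ 0) →
        ∀ t ∈ Set.Ico (0:ℝ) T,
          (signedArea (γ t) = 0 ↔
            t = (1 / (2 * μ ^ 2)) * Real.log (1 + μ ^ 2 * signedArea (γ 0) / π)))
    ∧ (ε = -1 → signedArea (γ 0) = π / μ ^ 2 →
        ∀ t ∈ Set.Ico (0:ℝ) T, signedArea (γ t) = signedArea (γ 0)) := by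
  have hc : ε * μ ^ 2 ≠ 0 := by rcases hε with rfl | rfl <;> simp [hμ.ne']
  have hlimit : π * 1 / (ε * μ ^ 2) = ε * π / μ ^ 2 := by
    rcases hε with rfl | rfl <;> simp [neg_div, div_neg]
  obtain ⟨hderiv, hsol, hzero, hconst⟩ :=
    area_evolution_gaussian_density_general hc hfam hclosed hflow hturn
  simp only [hlimit] at hsol hconst
  refine ⟨by simpa [mul_assoc] using hderiv, by simpa [mul_assoc] using hsol, ?_, ?_⟩
  · rintro rfl harea
    simpa using hzero one_ne_zero (by positivity)
  · rintro rfl harea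
    exact hconst (by rw [harea]; ring)
end
end

section
/- Let a ∈ ℝ and ψ(x) = a − ln|x| on ℝ²∖{0} (the critical radial density). If γ is a closed ψ-minimal plane curve whose image is contained in ℝ²∖{0}, then |γ(u)| is constant in u; that is, the image of γ is contained in a circle centered at the origin. Hence the circles centered at the origin are the only closed ψ-minimal curves for this density. -/
noncomputable section
open Real Set

/-!
Weighting length by `e^ψ = e^a / |x|` turns the punctured plane, via the complex logarithm, into a
flat cylinder whose generators are the rays from the origin. Its geodesics meet all these rays at
one constant angle: they are logarithmic spirals, circles and rays. Concretely, with `p = γ / |γ|`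
one has `∂_s ⟨T, p⟩ = ⟨N, p⟩ k_ψ`, so `∂_s |γ| = ⟨T, p⟩` is constant along a `ψ`-minimal curve; as
soon as `|γ|` takes the same value twice, Rolle's theorem forces this constant to be `0`.
-/

section Plane

lemma dot2_smul_left (c : ℝ) (v w : ℝ × ℝ) : dot2 (c • v) w = c * dot2 v w := by
  simp only [dot2, Prod.smul_fst, Prod.smul_snd, smul_eq_mul]
  ring

lemma dot2_smul_right (c : ℝ) (v w : ℝ × ℝ) : dot2 v (c • w) = c * dot2 v w := by
  simp only [dot2, Prod.smul_fst, Prod.smul_snd, smul_eq_mul]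
  ring

lemma dot2_comm (v w : ℝ × ℝ) : dot2 v w = dot2 w v := by
  simp only [dot2]
  ring

lemma sq_nrm2 (v : ℝ × ℝ) : nrm2 v ^ 2 = dot2 v v := by
  rw [nrm2, Real.sq_sqrt (by positivity), dot2]
  ring

lemma sq_add_sq_pos {v : ℝ × ℝ} (hv : v ≠ 0) : 0 < v.1 ^ 2 + v.2 ^ 2 := by
  contrapose! hv
  ext <;> simp only [Prod.fst_zero, Prod.snd_zero] <;> nlinarith [sq_nonneg v.1, sq_nonneg v.2]

lemma nrm2_pos {v : ℝ × ℝ} (hv : v ≠ 0) : 0 < nrm2 v :=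
  Real.sqrt_pos.mpr (sq_add_sq_pos hv)

lemma dot2_sq_add_dot2_Jrot_sq (v w : ℝ × ℝ) :
    dot2 v w ^ 2 + dot2 v (Jrot w) ^ 2 = dot2 v v * dot2 w w := by
  simp only [dot2, Jrot]
  ring

lemma eq_dot2_smul_add_dot2_Jrot_smul {e : ℝ × ℝ} (he : dot2 e e = 1) (v : ℝ × ℝ) :
    v = dot2 v e • e + dot2 v (Jrot e) • Jrot e := by
  simp only [dot2] at he
  ext <;> simp only [dot2, Jrot, Prod.fst_add, Prod.snd_add, Prod.smul_fst, Prod.smul_snd,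
    smul_eq_mul]
  · linear_combination -v.1 * he
  · linear_combination -v.2 * he

lemma hasDerivAt_dot2 {f g : ℝ → ℝ × ℝ} {f' g' : ℝ × ℝ} {u : ℝ}
    (hf : HasDerivAt f f' u) (hg : HasDerivAt g g' u) :
    HasDerivAt (fun t => dot2 (f t) (g t)) (dot2 f' (g u) + dot2 (f u) g') u := by
  have hfst := HasDerivAt.fun_mul hf.fst hg.fst
  have hsnd := HasDerivAt.fun_mul hf.snd hg.snd
  refine (hfst.add hsnd).congr_deriv ?_
  simp only [dot2]
  ring

lemma hasFDerivAt_nrm2 {p : ℝ × ℝ} (hp : p ≠ 0) :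
    HasFDerivAt nrm2
      ((nrm2 p)⁻¹ • (p.1 • ContinuousLinearMap.fst ℝ ℝ ℝ + p.2 • ContinuousLinearMap.snd ℝ ℝ ℝ))
      p := by
  have hsq := (((hasFDerivAt_fst (𝕜 := ℝ) (p := p)).pow 2).add
    ((hasFDerivAt_snd (𝕜 := ℝ) (p := p)).pow 2)).sqrt (sq_add_sq_pos hp).ne'
  refine hsq.congr_fderiv ?_
  ext <;>
    simp only [ContinuousLinearMap.comp_apply, smul_apply, add_apply, ContinuousLinearMap.coe_fst',
      ContinuousLinearMap.coe_snd', Pi.add_apply, nsmul_eq_mul, smul_eq_mul, nrm2] <;>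
    ring

lemma hasDerivAt_nrm2_comp {f : ℝ → ℝ × ℝ} {f' : ℝ × ℝ} {u : ℝ}
    (hf : HasDerivAt f f' u) (h0 : f u ≠ 0) :
    HasDerivAt (fun t => nrm2 (f t)) (dot2 (f u) f' / nrm2 (f u)) u := by
  refine ((hasFDerivAt_nrm2 h0).comp_hasDerivAt u hf).congr_deriv ?_
  simp only [smul_apply, add_apply, ContinuousLinearMap.coe_fst', ContinuousLinearMap.coe_snd',
    smul_eq_mul, dot2, div_eq_inv_mul]

lemma fderiv_const_sub_log_nrm2 (a : ℝ) {p : ℝ × ℝ} (hp : p ≠ 0) (v : ℝ × ℝ) :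
    fderiv ℝ (fun x => a - Real.log (nrm2 x)) p v = -(dot2 p v / nrm2 p ^ 2) := by
  rw [(((hasFDerivAt_nrm2 hp).log (nrm2_pos hp).ne').const_sub a).fderiv]
  simp only [neg_apply, smul_apply, add_apply, ContinuousLinearMap.coe_fst',
    ContinuousLinearMap.coe_snd', smul_eq_mul, dot2]
  ring

end Plane

section Frenet

variable {γ : ℝ → ℝ × ℝ} {u : ℝ}

lemma dot2_deriv_right (hreg : deriv γ u ≠ 0) (v : ℝ × ℝ) :
    dot2 v (deriv γ u) = nrm2 (deriv γ u) * dot2 v (tangentC γ u) := by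
  rw [tangentC, dot2_smul_right, mul_inv_cancel_left₀ (nrm2_pos hreg).ne']

lemma dot2_tangentC_self (hreg : deriv γ u ≠ 0) : dot2 (tangentC γ u) (tangentC γ u) = 1 := by
  have hpos := nrm2_pos hreg
  rw [tangentC, dot2_smul_left, dot2_smul_right, ← sq_nrm2]
  field_simp

lemma differentiableAt_tangentC (hγ' : DifferentiableAt ℝ (deriv γ) u) (hreg : deriv γ u ≠ 0) :
    DifferentiableAt ℝ (tangentC γ) u :=
  ((hasDerivAt_nrm2_comp hγ'.hasDerivAt hreg).differentiableAt.inv (nrm2_pos hreg).ne').smul hγ'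

lemma dot2_deriv_tangentC_tangentC (hγ' : DifferentiableAt ℝ (deriv γ) u)
    (hreg : deriv γ u ≠ 0) : dot2 (deriv (tangentC γ) u) (tangentC γ u) = 0 := by
  have hT := (differentiableAt_tangentC hγ' hreg).hasDerivAt
  have hunit : (fun t => dot2 (tangentC γ t) (tangentC γ t)) =ᶠ[nhds u] fun _ => 1 :=
    (hγ'.continuousAt.eventually_ne hreg).mono fun _ ht => dot2_tangentC_self ht
  have hsum := (hasDerivAt_dot2 hT hT).unique ((hasDerivAt_const u 1).congr_of_eventuallyEq hunit)
  rw [dot2_comm (tangentC γ u)] at hsum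
  linarith

lemma hasDerivAt_tangentC (hγ' : DifferentiableAt ℝ (deriv γ) u) (hreg : deriv γ u ≠ 0) :
    HasDerivAt (tangentC γ) ((nrm2 (deriv γ u) * curvature γ u) • normalC γ u) u := by
  have hnormal :
      dot2 (deriv (tangentC γ) u) (normalC γ u) = nrm2 (deriv γ u) * curvature γ u := by
    rw [curvature, arcDeriv, dot2_smul_left, mul_inv_cancel_left₀ (nrm2_pos hreg).ne']
  refine (differentiableAt_tangentC hγ' hreg).hasDerivAt.congr_deriv ?_
  rw [eq_dot2_smul_add_dot2_Jrot_smul (dot2_tangentC_self hreg) (deriv (tangentC γ) u),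
    dot2_deriv_tangentC_tangentC hγ' hreg, zero_smul, zero_add, ← normalC, hnormal]

end Frenet

section Radial

variable {γ : ℝ → ℝ × ℝ} {u : ℝ}

/-- The cosine of the angle from the position vector `γ u` to the unit tangent, which is also the
arc-length derivative of `|γ|`. It takes the junk value `0` where `γ u = 0`. -/
def radialCosine (γ : ℝ → ℝ × ℝ) (u : ℝ) : ℝ :=
  dot2 (tangentC γ u) (γ u) / nrm2 (γ u)

lemma hasDerivAt_nrm2_radialCosine (hγ : DifferentiableAt ℝ γ u) (hreg : deriv γ u ≠ 0)
    (h0 : γ u ≠ 0) :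
    HasDerivAt (fun t => nrm2 (γ t)) (nrm2 (deriv γ u) * radialCosine γ u) u := by
  refine (hasDerivAt_nrm2_comp hγ.hasDerivAt h0).congr_deriv ?_
  rw [dot2_deriv_right hreg, dot2_comm, radialCosine, mul_div_assoc]

lemma psiCurv_const_sub_log_nrm2 (a : ℝ) (h0 : γ u ≠ 0) :
    psiCurv (fun x => a - Real.log (nrm2 x)) γ u =
      curvature γ u + dot2 (γ u) (normalC γ u) / nrm2 (γ u) ^ 2 := by
  rw [psiCurv, fderiv_const_sub_log_nrm2 a h0, sub_neg_eq_add]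

lemma hasDerivAt_radialCosine (a : ℝ) (hγ : DifferentiableAt ℝ γ u)
    (hγ' : DifferentiableAt ℝ (deriv γ) u) (hreg : deriv γ u ≠ 0) (h0 : γ u ≠ 0) :
    HasDerivAt (radialCosine γ)
      (nrm2 (deriv γ u) * (dot2 (γ u) (normalC γ u) / nrm2 (γ u)) *
        psiCurv (fun x => a - Real.log (nrm2 x)) γ u) u := by
  have hr := nrm2_pos h0
  have hpythagoras :
      dot2 (γ u) (tangentC γ u) ^ 2 + dot2 (γ u) (normalC γ u) ^ 2 = nrm2 (γ u) ^ 2 := by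
    rw [normalC, dot2_sq_add_dot2_Jrot_sq, dot2_tangentC_self hreg, mul_one, sq_nrm2]
  refine ((hasDerivAt_dot2 (hasDerivAt_tangentC hγ' hreg) hγ.hasDerivAt).div
    (hasDerivAt_nrm2_radialCosine hγ hreg h0) hr.ne').congr_deriv ?_
  rw [psiCurv_const_sub_log_nrm2 a h0, dot2_deriv_right hreg, dot2_tangentC_self hreg, mul_one,
    dot2_smul_left, dot2_comm (normalC γ u), radialCosine, dot2_comm (tangentC γ u)]
  field_simp
  linear_combination (-nrm2 (deriv γ u)) * hpythagoras

end Radial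

theorem psiMinimal_critical_is_circle_general
    (a : ℝ) (γ : ℝ → ℝ × ℝ) (hγ : Differentiable ℝ γ) (hγ' : Differentiable ℝ (deriv γ))
    (hreg : ∀ u, deriv γ u ≠ 0) (havoid : ∀ u, γ u ≠ 0)
    (hmin : IsPsiMinimal (fun x => a - Real.log (nrm2 x)) γ)
    {s t : ℝ} (hst : s < t) (hnorm : nrm2 (γ s) = nrm2 (γ t)) :
    ∃ r : ℝ, 0 < r ∧ ∀ u : ℝ, nrm2 (γ u) = r := by
  have hcos (u : ℝ) : HasDerivAt (radialCosine γ) 0 u := by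
    simpa only [hmin u, mul_zero] using
      hasDerivAt_radialCosine a (hγ u) (hγ' u) (hreg u) (havoid u)
  have hradius (u : ℝ) :
      HasDerivAt (fun v => nrm2 (γ v)) (nrm2 (deriv γ u) * radialCosine γ u) u :=
    hasDerivAt_nrm2_radialCosine (hγ u) (hreg u) (havoid u)
  obtain ⟨c, -, hc⟩ := exists_hasDerivAt_eq_zero hst
    (fun u _ => (hradius u).continuousAt.continuousWithinAt) hnorm fun u _ => hradius u
  have hcos_zero (u : ℝ) : radialCosine γ u = 0 :=
    (is_const_of_deriv_eq_zero (fun v => (hcos v).differentiableAt) (fun v => (hcos v).deriv)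
      u c).trans ((mul_eq_zero.mp hc).resolve_left (nrm2_pos (hreg c)).ne')
  have hradius_const := is_const_of_deriv_eq_zero (fun u => (hradius u).differentiableAt)
    fun u => by rw [(hradius u).deriv, hcos_zero u, mul_zero]
  exact ⟨nrm2 (γ 0), nrm2_pos (havoid 0), fun u => hradius_const u 0⟩

/-- for the critical density ψ(x) = a − ln|x|, every closed
ψ-minimal curve avoiding the origin lies on a circle centered at the origin. -/
theorem psiMinimal_critical_is_circle
    (a : ℝ) (γ : ℝ → ℝ × ℝ) (hγ : IsClosedCurve γ) (havoid : ∀ u, γ u ≠ 0)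
    (hmin : IsPsiMinimal (fun x => a - Real.log (nrm2 x)) γ) :
    ∃ r : ℝ, 0 < r ∧ ∀ u : ℝ, nrm2 (γ u) = r := by
  have hdiff := contDiff_infty_iff_deriv.mp hγ.smooth
  exact psiMinimal_critical_is_circle_general a γ hdiff.1 (hdiff.2.differentiable (by simp))
    hγ.regular havoid hmin two_pi_pos (congrArg nrm2 (by simpa using (hγ.periodic 0).symm))
end
end
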